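/- For every real α > −1/2 and every real x, the square of the function 𝕁_α(x) = ₀F₁(α+1; −x²/4) = Σ_{k=0}^{∞} (−x²/4)^k / (k! (α+1)_k) satisfies 𝕁_α(x)² = ₁F₂(α + 1/2; α+1, 2α+1; −x²) = Σ_{k=0}^{∞} (α+1/2)_k / (k! (α+1)_k (2α+1)_k) · (−x²)^k. -/

import Mathlib

/-- Pochhammer symbol `(a)_k = a (a+1) ⋯ (a+k-1)` for a real number `a`. -/
noncomputable def poch (a : ℝ) (k : ℕ) : ℝ := ∏ i ∈ Finset.range k, (a + i)

/-- The generalized hypergeometric series `₀F₁(b; z)`. -/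
noncomputable def zeroF1 (b z : ℝ) : ℝ :=
  ∑' k : ℕ, z ^ k / ((k.factorial : ℝ) * poch b k)

/-- The generalized hypergeometric series `₁F₂(a; b, c; z)`. -/
noncomputable def oneF2 (a b c z : ℝ) : ℝ :=
  ∑' k : ℕ, poch a k / ((k.factorial : ℝ) * poch b k * poch c k) * z ^ k

/-!
The Cauchy product of `₀F₁(b; z)` and `₀F₁(c; z)` has `n`-th coefficient
`∑_{i+j=n} 1 / (i! j! (b)_i (c)_j)`. Since `(b)_n = (b)_i (b+i)_j` and `(b+i)_j / j!` is the
binomial coefficient `C(b+n-1, j)`, multiplying by `(b)_n (c)_n` turns this sum into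
`∑ C(c+n-1, i) C(b+n-1, j)`, which the Chu-Vandermonde identity evaluates as
`C(b+c+2n-2, n) = (b+c+n-1)_n / n!`. For `c = b` the duplication formula
`(2a)_{2n} = 4^n (a)_n (a+1/2)_n` with `a = b - 1/2` simplifies the result to the coefficient of a
`₁F₂` series at `4z`.
-/

open Finset Filter Topology
open scoped Nat

theorem poch_zero (a : ℝ) : poch a 0 = 1 :=
  prod_range_zero _

theorem poch_succ (a : ℝ) (k : ℕ) : poch a (k + 1) = poch a k * (a + k) :=
  prod_range_succ _ _

theorem poch_add (a : ℝ) (m n : ℕ) : poch a (m + n) = poch a m * poch (a + m) n := by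
  simp only [poch, prod_range_add, Nat.cast_add, add_assoc]

theorem poch_ne_zero {a : ℝ} (ha : ∀ n : ℕ, a ≠ -n) (k : ℕ) : poch a k ≠ 0 :=
  prod_ne_zero_iff.mpr fun i _ h => ha i (eq_neg_of_add_eq_zero_left h)

theorem poch_eq_ascPochhammer_eval (a : ℝ) (k : ℕ) : poch a k = (ascPochhammer ℝ k).eval a := by
  induction k with
  | zero => simp [poch_zero]
  | succ k ih => rw [poch_succ, ascPochhammer_succ_eval, ih]

theorem poch_two_mul (a : ℝ) (n : ℕ) :
    poch (2 * a) (2 * n) = 4 ^ n * poch a n * poch (a + 1 / 2) n := by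
  induction n with
  | zero => simp [poch_zero]
  | succ n ih =>
    rw [Nat.mul_succ, poch_succ, poch_succ, ih, poch_succ, poch_succ]
    push_cast
    ring

theorem poch_two_mul_mul_poch_two_mul_add (a : ℝ) (n : ℕ) :
    poch (2 * a) n * poch (2 * a + n) n = 4 ^ n * poch a n * poch (a + 1 / 2) n := by
  rw [← poch_add, ← two_mul n, poch_two_mul]

theorem choose_add_sub_one_eq_poch_div (a : ℝ) (n : ℕ) :
    Ring.choose (a + n - 1) n = poch a n / n ! := by
  rw [← Ring.multichoose_eq, eq_div_iff (by positivity), mul_comm, ← nsmul_eq_mul,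
    Ring.factorial_nsmul_multichoose_eq_ascPochhammer, poch_eq_ascPochhammer_eval,
    ← Polynomial.ascPochhammer_smeval_eq_eval]

theorem sum_antidiagonal_poch_mul_poch (b c : ℝ) (n : ℕ) :
    ∑ p ∈ antidiagonal n, poch (c + p.2) p.1 / p.1 ! * (poch (b + p.1) p.2 / p.2 !) =
      poch (b + c + n - 1) n / n ! := by
  have vandermonde := Ring.add_choose_eq n (Commute.all (c + n - 1) (b + n - 1))
  rw [show c + n - 1 + (b + n - 1) = b + c + n - 1 + n - 1 by ring,
    choose_add_sub_one_eq_poch_div] at vandermonde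
  rw [vandermonde]
  refine sum_congr rfl fun p hp => ?_
  have hn : (n : ℝ) = p.1 + p.2 := by exact_mod_cast (mem_antidiagonal.mp hp).symm
  rw [← choose_add_sub_one_eq_poch_div, ← choose_add_sub_one_eq_poch_div, hn]
  congr 2 <;> ring

theorem sum_antidiagonal_one_div_factorial_mul_poch {b c : ℝ} (hb : ∀ n : ℕ, b ≠ -n)
    (hc : ∀ n : ℕ, c ≠ -n) (n : ℕ) :
    ∑ p ∈ antidiagonal n, 1 / (p.1 ! * poch b p.1) * (1 / (p.2 ! * poch c p.2)) =
      poch (b + c + n - 1) n / (n ! * poch b n * poch c n) := by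
  rw [mul_assoc, ← div_div, ← sum_antidiagonal_poch_mul_poch, sum_div]
  refine sum_congr rfl fun p hp => ?_
  have hbn : poch b n = poch b p.1 * poch (b + p.1) p.2 := by
    rw [← poch_add, mem_antidiagonal.mp hp]
  have hcn : poch c n = poch c p.2 * poch (c + p.2) p.1 := by
    rw [← poch_add, add_comm, mem_antidiagonal.mp hp]
  have hb_tail : poch (b + p.1) p.2 ≠ 0 := right_ne_zero_of_mul (hbn ▸ poch_ne_zero hb n)
  have hc_tail : poch (c + p.2) p.1 ≠ 0 := right_ne_zero_of_mul (hcn ▸ poch_ne_zero hc n)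
  rw [hbn, hcn]
  field_simp

theorem summable_pow_div_factorial_mul_poch (b z : ℝ) :
    Summable fun k : ℕ => z ^ k / (k ! * poch b k) := by
  have ratio_tendsto : Tendsto (fun k : ℕ => z / ((k + 1) * (b + k))) atTop (𝓝 0) :=
    tendsto_const_nhds.div_atTop <|
      (tendsto_natCast_atTop_atTop.atTop_add tendsto_const_nhds).atTop_mul_atTop₀
        (tendsto_const_nhds.add_atTop tendsto_natCast_atTop_atTop)
  have ratio_le : ∀ᶠ k : ℕ in atTop, ‖z / ((k + 1) * (b + k))‖ ≤ 1 / 2 :=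
    ratio_tendsto.norm.eventually_le_const (by norm_num)
  refine summable_of_ratio_norm_eventually_le one_half_lt_one (ratio_le.mono fun k hk => ?_)
  have term_succ : z ^ (k + 1) / ((k + 1)! * poch b (k + 1)) =
      z / ((k + 1) * (b + k)) * (z ^ k / (k ! * poch b k)) := by
    rw [div_mul_div_comm, pow_succ', poch_succ, Nat.factorial_succ]
    push_cast
    ring
  rw [term_succ, norm_mul]
  gcongr

theorem zeroF1_mul_zeroF1 {b c : ℝ} (hb : ∀ n : ℕ, b ≠ -n) (hc : ∀ n : ℕ, c ≠ -n) (z : ℝ) :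
    zeroF1 b z * zeroF1 c z =
      ∑' n : ℕ, poch (b + c + n - 1) n / (n ! * poch b n * poch c n) * z ^ n := by
  rw [zeroF1, zeroF1, tsum_mul_tsum_eq_tsum_sum_antidiagonal_of_summable_norm
    (summable_pow_div_factorial_mul_poch b z).norm (summable_pow_div_factorial_mul_poch c z).norm]
  refine tsum_congr fun n => ?_
  rw [← sum_antidiagonal_one_div_factorial_mul_poch hb hc, sum_mul]
  refine sum_congr rfl fun p hp => ?_
  rw [← mem_antidiagonal.mp hp, pow_add]
  ring

theorem stmt6_general (α : ℝ) (hα : ∀ n : ℕ, 2 * α + 1 ≠ -n) (z : ℝ) :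
    zeroF1 (α + 1) z ^ 2 = oneF2 (α + 1 / 2) (α + 1) (2 * α + 1) (4 * z) := by
  have hα' : ∀ n : ℕ, α + 1 ≠ -n := fun n h => hα (2 * n + 1) (by push_cast; linarith)
  rw [sq, zeroF1_mul_zeroF1 hα' hα', oneF2]
  refine tsum_congr fun n => ?_
  have hn : poch (α + 1) n ≠ 0 := poch_ne_zero hα' n
  have hn' : poch (2 * α + 1) n ≠ 0 := poch_ne_zero hα n
  have duplication : poch (2 * α + 1) n * poch (α + 1 + (α + 1) + n - 1) n =
      4 ^ n * poch (α + 1 / 2) n * poch (α + 1) n := by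
    convert! poch_two_mul_mul_poch_two_mul_add (α + 1 / 2) n using 3 <;> ring
  rw [eq_div_of_mul_eq hn' ((mul_comm _ _).trans duplication), mul_pow]
  field_simp

theorem stmt6 (α : ℝ) (hα : -1 / 2 < α) (x : ℝ) :
    (zeroF1 (α + 1) (-x ^ 2 / 4)) ^ 2 =
      oneF2 (α + 1 / 2) (α + 1) (2 * α + 1) (-x ^ 2) := by
  rw [stmt6_general α (fun n => by linarith [n.cast_nonneg (α := ℝ)]) (-x ^ 2 / 4),
    mul_div_cancel₀ _ four_ne_zero]
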